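/- Let d ≥ 2 and let y₀, y₁, …, y_{d+1} be vectors in the Lorentzian space 𝕃^{d+1,1} = ℝ^{d+2} satisfying ⟨yᵢ, yⱼ⟩ = 1 − max(i,j) for all i, j. Then, writing κᵢ = κ(yᵢ), one has κ_{d+1}² = d · Σ_{i=0}^{d} (κᵢ − κ_{i+1})². -/

import Mathlib

/-!
The successive differences `uᵢ = yᵢ − yᵢ₊₁` (`0 ≤ i ≤ d`) together with `u_{d+1} = y_{d+1}` form a
Lorentz-orthogonal basis with squared norms `1, …, 1, −d`: this is immediate from the Gram condition
`⟨yᵢ, yⱼ⟩ = 1 − max(i,j)`. The curvature is, up to sign, the product with the light-like vector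
`x_N`, so expanding `0 = ⟨x_N, x_N⟩` in this orthogonal basis (`sum_sq_of_orthogonal`) gives
`∑ᵢ κ(uᵢ)² − κ(y_{d+1})² / d = 0`, which is the claim.
-/

open Finset Matrix

/-- The Lorentzian product on `ℝ^n`:
`⟨x, y⟩ = x₁y₁ + ⋯ + x_{n-1}y_{n-1} − x_n y_n`. -/
noncomputable def lprod {n : ℕ} (x y : Fin n → ℝ) : ℝ :=
  ∑ i : Fin n, (if (i : ℕ) + 1 = n then -1 else 1) * x i * y i

/-- The curvature of a vector `x ∈ 𝕃^{d+1,1}`: `κ(x) = x_{d+2} − x_{d+1}`. -/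
noncomputable def curv {d : ℕ} (x : Fin (d + 2) → ℝ) : ℝ :=
  x ⟨d + 1, by omega⟩ - x ⟨d, by omega⟩

/-- Parseval's identity for an indefinite form: if the rows of `U` are orthogonal for the form with
matrix `L = L⁻¹`, with squared norms `w i ≠ 0`, then any `c` satisfies
`∑ i, (U c)ᵢ² / w i = cᵀ L c`. -/
lemma sum_sq_of_orthogonal {ι : Type*} [Fintype ι] [DecidableEq ι] (U L : Matrix ι ι ℝ)
    (w c : ι → ℝ) (hw : ∀ i, w i ≠ 0) (hL : L * L = 1) (hU : U * L * Uᵀ = diagonal w) :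
    ∑ i, (w i)⁻¹ * (U *ᵥ c) i ^ 2 = c ⬝ᵥ L *ᵥ c := by
  have h1 : (U * L) * (Uᵀ * diagonal (fun i => (w i)⁻¹)) = 1 := by
    rw [← Matrix.mul_assoc, hU, diagonal_mul_diagonal, ← diagonal_one]
    congr 1
    funext i
    exact mul_inv_cancel₀ (hw i)
  -- A one-sided inverse of a square matrix is two-sided; this is where the number of vectors matters.
  have h2 : Uᵀ * diagonal (fun i => (w i)⁻¹) * (U * L) = 1 := mul_eq_one_comm.mp h1
  have h3 : Uᵀ * diagonal (fun i => (w i)⁻¹) * U = L := by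
    have h := congrArg (· * L) h2
    simpa only [Matrix.mul_assoc, hL, Matrix.mul_one, Matrix.one_mul] using h
  rw [← h3, ← mulVec_mulVec, ← mulVec_mulVec, dotProduct_mulVec, vecMul_transpose, dotProduct]
  refine Finset.sum_congr rfl fun i _ => ?_
  rw [mulVec_diagonal]
  ring

lemma lprod_sub_left {n : ℕ} (x x' z : Fin n → ℝ) :
    lprod (x - x') z = lprod x z - lprod x' z := by
  simp only [lprod, ← Finset.sum_sub_distrib, Pi.sub_apply]
  exact Finset.sum_congr rfl fun i _ => by ring

lemma lprod_comm {n : ℕ} (x z : Fin n → ℝ) : lprod x z = lprod z x :=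
  Finset.sum_congr rfl fun i _ => by ring

lemma lprod_sub_right {n : ℕ} (x z z' : Fin n → ℝ) :
    lprod x (z - z') = lprod x z - lprod x z' := by
  rw [lprod_comm, lprod_sub_left, lprod_comm z, lprod_comm z']

/-- If the Lorentz products of `u₀, …, u_{d+1}` form the invertible diagonal matrix of `w`, then
`∑ i, κ(uᵢ)² / wᵢ = 0`, since the vector representing the curvature is light-like. -/
lemma sum_curv_sq_eq_zero {d : ℕ} (u : Fin (d + 2) → Fin (d + 2) → ℝ) (w : Fin (d + 2) → ℝ)
    (hw : ∀ i, w i ≠ 0) (hu : ∀ i j, lprod (u i) (u j) = diagonal w i j) :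
    ∑ i, (w i)⁻¹ * curv (u i) ^ 2 = 0 := by
  let s : Fin (d + 2) → ℝ := fun i => if (i : ℕ) + 1 = d + 2 then -1 else 1
  let c : Fin (d + 2) → ℝ := Pi.single ⟨d + 1, by omega⟩ 1 - Pi.single ⟨d, by omega⟩ 1
  have hL : diagonal s * diagonal s = 1 := by
    rw [diagonal_mul_diagonal, ← diagonal_one]
    congr 1
    funext i
    simp only [s]
    split_ifs <;> norm_num
  have hU : of u * diagonal s * (of u)ᵀ = diagonal w := by
    ext i j
    rw [← hu i j, Matrix.mul_apply, lprod]
    refine Finset.sum_congr rfl fun k _ => ?_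
    rw [mul_diagonal, transpose_apply, of_apply, of_apply]
    ring
  have h := sum_sq_of_orthogonal (of u) (diagonal s) w c hw hL hU
  have hc : ∀ i, (of u *ᵥ c) i = curv (u i) := fun i => by
    simp [c, curv, mulVec_sub]
  have h0 : c ⬝ᵥ diagonal s *ᵥ c = 0 := by
    simp [c, s, sub_dotProduct, mulVec_diagonal]
  simpa only [hc, h0] using h

/-- **Descartes-type theorem for the `(d+1)`-cube.** If `y₀, …, y_{d+1}` are vectors of
`𝕃^{d+1,1}` with `⟨yᵢ, yⱼ⟩ = 1 − max(i,j)`, then their curvatures satisfy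
`κ_{d+1}² = d · Σ_{i=0}^{d} (κᵢ − κ_{i+1})²`. -/
theorem cube_descartes_theorem (d : ℕ) (hd : 2 ≤ d)
    (y : ℕ → (Fin (d + 2) → ℝ))
    (hgram : ∀ i ≤ d + 1, ∀ j ≤ d + 1, lprod (y i) (y j) = 1 - (max i j : ℕ)) :
    (curv (y (d + 1))) ^ 2 =
      d * ∑ i ∈ Finset.range (d + 1), (curv (y i) - curv (y (i + 1))) ^ 2 := by
  let w : Fin (d + 2) → ℝ := Fin.snoc (fun _ : Fin (d + 1) => (1 : ℝ)) (-(d : ℝ))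
  let u : Fin (d + 2) → Fin (d + 2) → ℝ :=
    Fin.snoc (fun i : Fin (d + 1) => y i - y (i + 1)) (y (d + 1))
  have hd0 : (d : ℝ) ≠ 0 := by positivity
  have hw : ∀ i, w i ≠ 0 := fun i => by
    refine Fin.lastCases ?_ (fun i => ?_) i <;> simp [w, hd0]
  have hdiff : ∀ i ≤ d, lprod (y i - y (i + 1)) (y (d + 1)) = 0 := fun i hi => by
    rw [lprod_sub_left, hgram _ (by omega) _ le_rfl, hgram _ (by omega) _ le_rfl,
      max_eq_right (by omega), max_eq_right (by omega), sub_self]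
  have hlt : ∀ i j, i < j → j ≤ d → lprod (y i - y (i + 1)) (y j - y (j + 1)) = 0 := by
    intro i j hij hj
    rw [lprod_sub_left, lprod_sub_right, lprod_sub_right]
    repeat rw [hgram _ (by omega) _ (by omega), max_eq_right (by omega)]
    ring
  have hself : ∀ i ≤ d, lprod (y i - y (i + 1)) (y i - y (i + 1)) = 1 := fun i hi => by
    rw [lprod_sub_left, lprod_sub_right, lprod_sub_right, lprod_comm (y (i + 1)) (y i)]
    repeat rw [hgram _ (by omega) _ (by omega), max_eq_right (by omega)]
    push_cast
    ring
  have hu : ∀ i j, lprod (u i) (u j) = diagonal w i j := by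
    intro i j
    refine Fin.lastCases ?_ (fun i => ?_) i <;> refine Fin.lastCases ?_ (fun j => ?_) j
    · simp [u, w, hgram (d + 1) le_rfl (d + 1) le_rfl]
    · rw [diagonal_apply_ne _ (Fin.castSucc_lt_last j).ne', lprod_comm]
      simpa [u] using hdiff j (by omega)
    · rw [diagonal_apply_ne _ (Fin.castSucc_lt_last i).ne]
      simpa [u] using hdiff i (by omega)
    · simp only [u, Fin.snoc_castSucc]
      rcases lt_trichotomy i j with h | rfl | h
      · rw [diagonal_apply_ne _ (by simpa using h.ne)]
        exact hlt i j h (by omega)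
      · rw [diagonal_apply_eq, hself i (by omega)]
        simp [w]
      · rw [diagonal_apply_ne _ (by simpa using h.ne'), lprod_comm]
        exact hlt j i h (by omega)
  have h := sum_curv_sq_eq_zero u w hw hu
  have hcurv : ∀ x z : Fin (d + 2) → ℝ, curv (x - z) = curv x - curv z := fun x z => by
    simp only [curv, Pi.sub_apply]
    ring
  rw [Fin.sum_univ_castSucc] at h
  simp only [u, w, Fin.snoc_castSucc, Fin.snoc_last, hcurv, inv_one, one_mul] at h
  rw [Fin.sum_univ_eq_sum_range (fun i => (curv (y i) - curv (y (i + 1))) ^ 2)] at h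
  field_simp at h
  linarith
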